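/- arXiv:2506.09434 — 2 statements merged into one kernel-verified Lean document; each statement's English description precedes it below -/
import Mathlib

section
/- Let N = M ≥ 2 and consider the softmax reward with inner temperature t and outer temperature τ. If t > 0 and τ ≤ 0, then the heterogeneity gain satisfies ΔR(t,τ;N) ≥ σ(t,N) − 1/N, where σ(t,N) = e^t/(e^t + N − 1). -/
open Finset

/-- An N×M allocation matrix is admissible if all entries are nonnegative and
every agent's (row's) efforts sum to 1. -/
def Admissible {N M : ℕ} (A : Fin N → Fin M → ℝ) : Prop :=
  (∀ i j, 0 ≤ A i j) ∧ ∀ i, ∑ j, A i j = 1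

/-- An allocation is homogeneous if all rows coincide. -/
def Homogeneous {N M : ℕ} (A : Fin N → Fin M → ℝ) : Prop :=
  ∀ i i' : Fin N, A i = A i'

/-- The column of task `j`. -/
def col {N M : ℕ} (A : Fin N → Fin M → ℝ) (j : Fin M) : Fin N → ℝ :=
  fun i => A i j

/-- Softmax inner aggregator with temperature `t`: the task score
`T_j(A) = Σ_i (e^{t·r_{ij}} / Σ_ℓ e^{t·r_{ℓj}}) · r_{ij}` applied to a column. -/
noncomputable def innerScore (t : ℝ) {N : ℕ} (a : Fin N → ℝ) : ℝ :=
  ∑ i, Real.exp (t * a i) / (∑ l, Real.exp (t * a l)) * a i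

/-- Softmax team reward with inner temperature `t` and outer temperature `τ`:
`R(A) = Σ_j (e^{τ·T_j} / Σ_ℓ e^{τ·T_ℓ}) · T_j`. -/
noncomputable def softReward (t τ : ℝ) {N : ℕ} (A : Fin N → Fin N → ℝ) : ℝ :=
  ∑ j, Real.exp (τ * innerScore t (col A j)) /
      (∑ l, Real.exp (τ * innerScore t (col A l))) * innerScore t (col A j)

/-- `σ(t,N) = e^t / (e^t + N − 1)`. -/
noncomputable def sigma' (t : ℝ) (N : ℕ) : ℝ :=
  Real.exp t / (Real.exp t + N - 1)

/-- Heterogeneity gain `ΔR(t,τ;N) = R_het − R_hom` for the softmax reward. -/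
noncomputable def hetGain (t τ : ℝ) (N : ℕ) : ℝ :=
  sSup {r : ℝ | ∃ A : Fin N → Fin N → ℝ, Admissible A ∧ softReward t τ A = r} -
    sSup {r : ℝ | ∃ A : Fin N → Fin N → ℝ,
      Admissible A ∧ Homogeneous A ∧ softReward t τ A = r}

/-!
Both aggregators are weighted means with weights `e^{t·a_i}`, that is, centers of mass. If all rows
equal `x`, every task score `T_j` is the mean of a constant, so `T_j = x_j` and the reward is the
softmax mean of `x` at temperature `τ`. For `τ ≤ 0` its weights decrease as the entries increase,
so Chebyshev's sum inequality bounds it by the arithmetic mean `1 / N`, with equality at the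
uniform row: `R_hom = 1 / N`. The identity matrix gives every task the score `σ(t, N)`, whence
`R_het ≥ σ(t, N)`.
-/

theorem centerMass_le_mean_of_antivary {ι 𝕜 : Type*} [Fintype ι] [Nonempty ι] [Field 𝕜]
    [LinearOrder 𝕜] [IsStrictOrderedRing 𝕜] {w z : ι → 𝕜} (hwz : Antivary w z)
    (hw : 0 < ∑ i, w i) : univ.centerMass w z ≤ (∑ i, z i) / Fintype.card ι := by
  have hcard : (0 : 𝕜) < Fintype.card ι := mod_cast Fintype.card_pos
  rw [centerMass, smul_eq_mul, inv_mul_eq_div, div_le_div_iff₀ hw hcard, mul_comm,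
    mul_comm (∑ i, z i)]
  exact hwz.card_mul_sum_le_sum_mul_sum

section InnerScore

variable {N : ℕ}

theorem innerScore_eq_centerMass (t : ℝ) (a : Fin N → ℝ) :
    innerScore t a = univ.centerMass (fun i => Real.exp (t * a i)) a := by
  simp only [innerScore, centerMass, smul_eq_mul, mul_sum, div_eq_inv_mul, mul_assoc]

theorem innerScore_single (t : ℝ) (j : Fin N) (r : ℝ) :
    innerScore t (Pi.single j r) = Real.exp (t * r) / (Real.exp (t * r) + N - 1) * r := by
  have hweights : ∑ i, Real.exp (t * (Pi.single j r : Fin N → ℝ) i) =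
      Real.exp (t * r) + N - 1 := by
    have hoff : ∀ i ∈ univ.erase j, Real.exp (t * (Pi.single j r : Fin N → ℝ) i) = 1 :=
      fun i hi => by rw [Pi.single_eq_of_ne (ne_of_mem_erase hi), mul_zero, Real.exp_zero]
    rw [← add_sum_erase univ _ (mem_univ j), sum_congr rfl hoff, Pi.single_eq_same, sum_const,
      nsmul_one, cast_card_erase_of_mem (mem_univ j), card_fin, add_sub_assoc]
  rw [innerScore, hweights, Fintype.sum_eq_single j, Pi.single_eq_same]
  intro i hi
  rw [Pi.single_eq_of_ne hi, mul_zero]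

variable [NeZero N]

theorem sum_exp_mul_pos (t : ℝ) (a : Fin N → ℝ) : 0 < ∑ i, Real.exp (t * a i) :=
  sum_pos (fun _ _ => Real.exp_pos _) univ_nonempty

theorem innerScore_const (t c : ℝ) : innerScore t (fun _ : Fin N => c) = c := by
  rw [innerScore_eq_centerMass]
  exact centerMass_const (sum_exp_mul_pos t _).ne' c

theorem innerScore_le (t : ℝ) {a : Fin N → ℝ} {B : ℝ} (ha : ∀ i, a i ≤ B) :
    innerScore t a ≤ B := by
  rw [innerScore_eq_centerMass]
  exact (convex_Iic B).centerMass_mem (fun _ _ => (Real.exp_pos _).le) (sum_exp_mul_pos t a)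
    fun i _ => ha i

theorem innerScore_le_mean {t : ℝ} (ht : t ≤ 0) (a : Fin N → ℝ) :
    innerScore t a ≤ (∑ i, a i) / N := by
  have hanti : Antivary (fun i => Real.exp (t * a i)) a := fun i j hij =>
    Real.exp_le_exp.mpr (mul_le_mul_of_nonpos_left hij.le ht)
  simpa only [innerScore_eq_centerMass, Fintype.card_fin] using
    centerMass_le_mean_of_antivary hanti (sum_exp_mul_pos t a)

end InnerScore

section Admissible

variable {N M : ℕ} {A : Fin N → Fin M → ℝ}

theorem Admissible.le_one (hA : Admissible A) (i : Fin N) (j : Fin M) : A i j ≤ 1 :=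
  (single_le_sum (fun k _ => hA.1 i k) (mem_univ j)).trans_eq (hA.2 i)

theorem admissible_single_one (f : Fin N → Fin M) : Admissible fun i => Pi.single (f i) 1 :=
  ⟨fun _ => (Pi.single_nonneg (α := fun _ => ℝ)).mpr zero_le_one,
    fun i => Fintype.sum_pi_single' (f i) 1⟩

theorem admissible_uniform [NeZero M] : Admissible fun (_ : Fin N) (_ : Fin M) => 1 / (M : ℝ) :=
  ⟨fun _ _ => by positivity, fun _ => by simp⟩

end Admissible

section SoftReward

variable {N : ℕ}

theorem softReward_eq_innerScore (t τ : ℝ) (A : Fin N → Fin N → ℝ) :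
    softReward t τ A = innerScore τ fun j => innerScore t (col A j) :=
  rfl

variable [NeZero N]

theorem softReward_le (t τ : ℝ) {A : Fin N → Fin N → ℝ} {B : ℝ} (hA : ∀ i j, A i j ≤ B) :
    softReward t τ A ≤ B := by
  rw [softReward_eq_innerScore]
  exact innerScore_le τ fun j => innerScore_le t fun i => hA i j

theorem softReward_const_row (t τ : ℝ) (x : Fin N → ℝ) :
    softReward t τ (fun _ => x) = innerScore τ x := by
  have hscore (j : Fin N) : innerScore t (col (fun _ : Fin N => x) j) = x j :=
    innerScore_const t (x j)
  rw [softReward_eq_innerScore, funext hscore]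

theorem softReward_single_one (t τ : ℝ) :
    softReward t τ (fun i : Fin N => Pi.single i 1) = sigma' t N := by
  have hscore (j : Fin N) : innerScore t (col (fun i : Fin N => Pi.single i 1) j) = sigma' t N := by
    have hcol : col (fun i : Fin N => Pi.single i (1 : ℝ)) j = Pi.single j 1 :=
      funext fun i => Pi.single_comm i 1 j
    rw [hcol, innerScore_single, mul_one, mul_one, sigma']
  rw [softReward_eq_innerScore, funext hscore, innerScore_const]

theorem bddAbove_softReward_admissible (t τ : ℝ) :
    BddAbove {r : ℝ | ∃ A : Fin N → Fin N → ℝ, Admissible A ∧ softReward t τ A = r} := by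
  refine ⟨1, ?_⟩
  rintro _ ⟨A, hA, rfl⟩
  exact softReward_le t τ hA.le_one

theorem isGreatest_softReward_homogeneous (t : ℝ) {τ : ℝ} (hτ : τ ≤ 0) :
    IsGreatest {r : ℝ | ∃ A : Fin N → Fin N → ℝ,
      Admissible A ∧ Homogeneous A ∧ softReward t τ A = r} (1 / N) := by
  constructor
  · refine ⟨_, admissible_uniform, fun _ _ => rfl, ?_⟩
    rw [softReward_const_row, innerScore_const]
  · rintro _ ⟨A, hA, hhom, rfl⟩
    have hrows : A = fun _ => A 0 := funext fun i => hhom i 0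
    rw [hrows, softReward_const_row, ← hA.2 0]
    exact innerScore_le_mean hτ (A 0)

end SoftReward

theorem stmt4_general (N : ℕ) [NeZero N] (t τ : ℝ) (hτ : τ ≤ 0) :
    sigma' t N - 1 / N ≤ hetGain t τ N := by
  rw [hetGain, (isGreatest_softReward_homogeneous t hτ).csSup_eq]
  exact sub_le_sub_right (le_csSup (bddAbove_softReward_admissible t τ)
    ⟨_, admissible_single_one id, softReward_single_one t τ⟩) _

/-- Softmax heterogeneity gain, `t > 0`, `τ ≤ 0` case: for
`N = M ≥ 2`, `ΔR(t,τ;N) ≥ σ(t,N) − 1/N`. -/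
theorem stmt4 (N : ℕ) (hN : 2 ≤ N) (t τ : ℝ) (ht : 0 < t) (hτ : τ ≤ 0) :
    sigma' t N - 1 / N ≤ hetGain t τ N := by
  have : NeZero N := ⟨by omega⟩
  exact stmt4_general N t τ hτ
end

section
/- Let N ≥ M ≥ 2 and consider the team reward R(A) = (1/M) Σ_{j=1}^M max_{i} r_{ij} over admissible allocations. Then the supremum of R over admissible homogeneous allocations equals 1/M, the supremum over all admissible allocations equals 1, and hence the heterogeneity gain is ΔR = (M − 1)/M. -/
open Finset

section

variable {ι κ : Type*}

theorem iSup_single_apply_of_mem_range [DecidableEq κ] {f : ι → κ} {j : κ} (hj : j ∈ Set.range f) :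
    ⨆ i, (Pi.single (f i) 1 : κ → ℝ) j = 1 := by
  obtain ⟨i, rfl⟩ := hj
  refine IsGreatest.csSup_eq ⟨⟨i, Pi.single_eq_same _ _⟩, ?_⟩
  rintro _ ⟨k, rfl⟩
  simp only [Pi.single_apply]
  split_ifs <;> norm_num

variable [Fintype κ]

variable (ι κ) in
/-- The admissible allocations of agents `ι` to tasks `κ`: each agent distributes a unit of effort
over the tasks. There may be infinitely many agents. -/
def allocations : Set (ι → κ → ℝ) :=
  {A | ∀ i, A i ∈ stdSimplex ℝ κ}

variable (ι κ) in
/-- The admissible allocations in which all agents distribute their effort in the same way. -/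
def homogeneousAllocations : Set (ι → κ → ℝ) :=
  {A | A ∈ allocations ι κ ∧ ∀ i i', A i = A i'}

/-- The team reward with inner aggregator `max` and outer aggregator `mean`. The maximum over the
agents is written as a supremum, so that it makes sense for infinitely many agents. -/
noncomputable def teamReward (A : ι → κ → ℝ) : ℝ :=
  (∑ j, ⨆ i, A i j) / Fintype.card κ

variable {A : ι → κ → ℝ}

theorem teamReward_le_one (hA : A ∈ allocations ι κ) : teamReward A ≤ 1 := by
  have score_le_one (j : κ) : ⨆ i, A i j ≤ 1 :=
    Real.iSup_le (fun i => (mem_Icc_of_mem_stdSimplex (hA i) j).2) zero_le_one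
  refine div_le_one_of_le₀ ?_ (Nat.cast_nonneg _)
  simpa using sum_le_sum fun j (_ : j ∈ univ) => score_le_one j

theorem teamReward_of_mem_homogeneousAllocations [Nonempty ι]
    (hA : A ∈ homogeneousAllocations ι κ) : teamReward A = 1 / Fintype.card κ := by
  obtain ⟨hadm, hrows⟩ := hA
  obtain ⟨i₀⟩ := ‹Nonempty ι›
  have score_eq (j : κ) : ⨆ i, A i j = A i₀ j := by
    simp only [hrows _ i₀, ciSup_const]
  simp only [teamReward, score_eq, (hadm i₀).2]

theorem const_mem_homogeneousAllocations {v : κ → ℝ} (hv : v ∈ stdSimplex ℝ κ) :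
    Function.const ι v ∈ homogeneousAllocations ι κ :=
  ⟨fun _ => hv, fun _ _ => rfl⟩

theorem isGreatest_teamReward_homogeneousAllocations [Nonempty ι] [Nonempty κ] :
    IsGreatest (teamReward '' homogeneousAllocations ι κ) (1 / Fintype.card κ) := by
  classical
  obtain ⟨j₀⟩ := ‹Nonempty κ›
  have hconst := const_mem_homogeneousAllocations (ι := ι) (single_mem_stdSimplex ℝ j₀)
  refine ⟨⟨_, hconst, teamReward_of_mem_homogeneousAllocations hconst⟩, ?_⟩
  rintro _ ⟨A, hA, rfl⟩
  exact (teamReward_of_mem_homogeneousAllocations hA).le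

theorem single_mem_allocations [DecidableEq κ] (f : ι → κ) :
    (fun i => Pi.single (f i) 1) ∈ allocations ι κ :=
  fun i => single_mem_stdSimplex ℝ (f i)

theorem teamReward_single_of_surjective [DecidableEq κ] [Nonempty κ] {f : ι → κ}
    (hf : Function.Surjective f) : teamReward (fun i => Pi.single (f i) 1) = 1 := by
  simp [teamReward, iSup_single_apply_of_mem_range (hf _)]

theorem isGreatest_teamReward_allocations [Nonempty κ] (e : κ ↪ ι) :
    IsGreatest (teamReward '' allocations ι κ) 1 := by
  classical
  -- Full specialisation: a left inverse of `e` makes every task the only task of some agent.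
  have hf : Function.Surjective (Function.invFun e) := Function.invFun_surjective e.injective
  refine ⟨⟨_, single_mem_allocations _, teamReward_single_of_surjective hf⟩, ?_⟩
  rintro _ ⟨A, hA, rfl⟩
  exact teamReward_le_one hA

theorem stmt11_general [Nonempty κ] (e : κ ↪ ι) :
    IsGreatest (teamReward '' homogeneousAllocations ι κ) (1 / Fintype.card κ) ∧
    IsGreatest (teamReward '' allocations ι κ) 1 ∧
    sSup (teamReward '' allocations ι κ) - sSup (teamReward '' homogeneousAllocations ι κ) =
      ((Fintype.card κ : ℝ) - 1) / Fintype.card κ := by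
  have : Nonempty ι := .map e ‹_›
  have hhom := isGreatest_teamReward_homogeneousAllocations (ι := ι) (κ := κ)
  have hhet := isGreatest_teamReward_allocations e
  have card_ne_zero : (Fintype.card κ : ℝ) ≠ 0 := Nat.cast_ne_zero.2 Fintype.card_ne_zero
  refine ⟨hhom, hhet, ?_⟩
  rw [hhet.csSup_eq, hhom.csSup_eq, sub_div, div_self card_ne_zero]

end

theorem mem_allocations_iff_admissible {N M : ℕ} {A : Fin N → Fin M → ℝ} :
    A ∈ allocations (Fin N) (Fin M) ↔ Admissible A :=
  forall_and

theorem mem_homogeneousAllocations_iff {N M : ℕ} {A : Fin N → Fin M → ℝ} :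
    A ∈ homogeneousAllocations (Fin N) (Fin M) ↔ Admissible A ∧ Homogeneous A :=
  and_congr_left' mem_allocations_iff_admissible

/-- `U = mean`, `T = max`, continuous allocations: for
`N ≥ M ≥ 2`, the best homogeneous reward is `1/M`, the best overall reward is `1`,
and the heterogeneity gain is `ΔR = (M − 1)/M`. -/
theorem stmt11 {N M : ℕ} (hM : 2 ≤ M) (hNM : M ≤ N) :
    IsGreatest {r : ℝ | ∃ A : Fin N → Fin M → ℝ,
        Admissible A ∧ Homogeneous A ∧ (∑ j, ⨆ i, A i j) / M = r} (1 / M) ∧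
    IsGreatest {r : ℝ | ∃ A : Fin N → Fin M → ℝ,
        Admissible A ∧ (∑ j, ⨆ i, A i j) / M = r} 1 ∧
    sSup {r : ℝ | ∃ A : Fin N → Fin M → ℝ,
        Admissible A ∧ (∑ j, ⨆ i, A i j) / M = r} -
      sSup {r : ℝ | ∃ A : Fin N → Fin M → ℝ,
        Admissible A ∧ Homogeneous A ∧ (∑ j, ⨆ i, A i j) / M = r} = ((M : ℝ) - 1) / M := by
  have : NeZero M := ⟨by omega⟩
  simpa only [Set.image, mem_homogeneousAllocations_iff, mem_allocations_iff_admissible, and_assoc,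
    teamReward, Fintype.card_fin] using stmt11_general (Fin.castLEEmb hNM)
end
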